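/- Let G be a finite simple connected graph with at least one vertex. Then car(G) = 1 if and only if G contains no cycle (i.e., G is a tree). -/

import Mathlib

open SimpleGraph

/-- A set `S` is cycle convex in `G` if no vertex `w` outside `S` is such that the
subgraph induced by `S ∪ {w}` contains a cycle through `w`. -/
def IsCycleConvex {V : Type*} (G : SimpleGraph V) (S : Set V) : Prop :=
  ∀ w : V, w ∉ S →
    ¬ ∃ c : (G.induce (S ∪ {w})).Walk ⟨w, Set.mem_union_right S rfl⟩
        ⟨w, Set.mem_union_right S rfl⟩, c.IsCycle

/-- The cycle convex hull of `S`: the smallest cycle convex set containing `S`. -/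
def cycleHull {V : Type*} (G : SimpleGraph V) (S : Set V) : Set V :=
  ⋂₀ {T : Set V | S ⊆ T ∧ IsCycleConvex G T}

/-- `S` is Carathéodory independent in the cycle convexity of `G`. -/
def CIndep {V : Type*} (G : SimpleGraph V) (S : Set V) : Prop :=
  ∃ p ∈ cycleHull G S, ∀ a ∈ S, p ∉ cycleHull G (S \ {a})

/-- The Carathéodory number of `G` in the cycle convexity. -/
noncomputable def carNumber {V : Type*} (G : SimpleGraph V) : ℕ :=
  sSup {n : ℕ | ∃ S : Set V, CIndep G S ∧ S.ncard = n}

/-!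
In an acyclic graph every vertex set is cycle convex, so every hull is trivial and the Carathéodory
independent sets are exactly the singletons. Conversely, a cycle with one vertex removed is a finite
set that is not cycle convex. A minimal such set `S` is Carathéodory independent, since the hull of
`S` contains a vertex outside `S` while each `S \ {a}` is its own hull. It has at least two elements
because the two neighbours of a vertex along a cycle are distinct.
-/

section CycleConvexity

variable {V : Type*} {G : SimpleGraph V} {S : Set V}

theorem isCycleConvex_iff_forall_isCycle :
    IsCycleConvex G S ↔
      ∀ ⦃v : V⦄ (c : G.Walk v v), c.IsCycle → (∀ x ∈ c.support, x ≠ v → x ∈ S) → v ∈ S := by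
  constructor
  · intro h v c hc hcS
    by_contra hv
    have hsupport : ∀ x ∈ c.support, x ∈ S ∪ {v} := fun x hx =>
      or_iff_not_imp_right.2 (hcS x hx)
    have hmap : ((c.induce _ hsupport).map (Embedding.induce _).toHom).IsCycle := by
      rwa [Walk.map_induce]
    exact h v hv ⟨c.induce _ hsupport, hmap.of_map⟩
  · rintro h w hw ⟨c, hc⟩
    have hmap : (c.map (Embedding.induce (S ∪ {w})).toHom).IsCycle :=
      hc.map Subtype.val_injective
    refine hw (h _ hmap fun x hx hxw => ?_)
    obtain ⟨y, -, rfl⟩ := List.mem_map.1 (Walk.support_map _ c ▸ hx)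
    exact y.2.resolve_right hxw

theorem subset_cycleHull : S ⊆ cycleHull G S :=
  Set.subset_sInter fun _ hT => hT.1

theorem isCycleConvex_cycleHull : IsCycleConvex G (cycleHull G S) := by
  refine isCycleConvex_iff_forall_isCycle.2 fun v c hc hcS T hT => ?_
  have hcT : ∀ x ∈ c.support, x ≠ v → x ∈ T := fun x hx hxv => hcS x hx hxv T hT
  exact isCycleConvex_iff_forall_isCycle.1 hT.2 c hc hcT

theorem IsCycleConvex.cycleHull_eq (h : IsCycleConvex G S) : cycleHull G S = S :=
  Set.Subset.antisymm (Set.sInter_subset_of_mem ⟨subset_rfl, h⟩) subset_cycleHull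

theorem isCycleConvex_of_cycleHull_subset (h : cycleHull G S ⊆ S) : IsCycleConvex G S := by
  have heq : cycleHull G S = S := h.antisymm subset_cycleHull
  exact heq ▸ isCycleConvex_cycleHull

theorem isCycleConvex_of_isAcyclic (hG : G.IsAcyclic) (S : Set V) : IsCycleConvex G S :=
  isCycleConvex_iff_forall_isCycle.2 fun _ c hc => (hG c hc).elim

theorem isCycleConvex_of_subsingleton (hS : S.Subsingleton) : IsCycleConvex G S := by
  refine isCycleConvex_iff_forall_isCycle.2 fun v c hc hcS => ?_
  have hsnd : c.snd ∈ S := hcS _ (c.getVert_mem_support 1) (c.adj_snd hc.not_nil).ne'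
  have hpenultimate : c.penultimate ∈ S :=
    hcS _ (c.getVert_mem_support _) (c.adj_penultimate hc.not_nil).ne
  exact (hc.snd_ne_penultimate (hS hsnd hpenultimate)).elim

theorem isAcyclic_of_forall_finite_isCycleConvex
    (h : ∀ S : Set V, S.Finite → IsCycleConvex G S) : G.IsAcyclic := by
  intro v c hc
  have hfinite : {x | x ∈ c.support ∧ x ≠ v}.Finite :=
    c.support.finite_toSet.subset fun _ hx => hx.1
  have hv := isCycleConvex_iff_forall_isCycle.1 (h _ hfinite) c hc fun x hx hxv => ⟨hx, hxv⟩
  exact hv.2 rfl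

theorem cIndep_of_minimal_not_isCycleConvex
    (hS : Minimal (fun T => ¬ IsCycleConvex G T) S) : CIndep G S := by
  obtain ⟨p, hp, hpS⟩ := Set.not_subset.1 (mt isCycleConvex_of_cycleHull_subset hS.prop)
  refine ⟨p, hp, fun a ha hpa => hpS ?_⟩
  have hconvex : IsCycleConvex G (S \ {a}) :=
    not_not.1 (hS.not_prop_of_lt (Set.sdiff_singleton_ssubset.2 ha))
  exact (hconvex.cycleHull_eq ▸ hpa).1

theorem exists_finite_minimal_not_isCycleConvex_of_not_isAcyclic (hG : ¬ G.IsAcyclic) :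
    ∃ S : Set V, S.Finite ∧ Minimal (fun T => ¬ IsCycleConvex G T) S := by
  obtain ⟨T, hT, hTconvex⟩ : ∃ T : Set V, T.Finite ∧ ¬ IsCycleConvex G T := by
    simpa only [not_forall, exists_prop] using mt isAcyclic_of_forall_finite_isCycleConvex hG
  have hfinite : {U | U ⊆ T ∧ ¬ IsCycleConvex G U}.Finite :=
    hT.finite_subsets.subset fun _ hU => hU.1
  obtain ⟨S, hST, hS⟩ := hfinite.exists_le_minimal ⟨subset_rfl, hTconvex⟩
  exact ⟨S, hT.subset hST, hS.prop.2, fun U hU hUS => hS.le_of_le ⟨hUS.trans hST, hU⟩ hUS⟩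

theorem exists_cIndep_one_lt_ncard_of_not_isAcyclic (hG : ¬ G.IsAcyclic) :
    ∃ S : Set V, CIndep G S ∧ 1 < S.ncard := by
  obtain ⟨S, hfinite, hS⟩ := exists_finite_minimal_not_isCycleConvex_of_not_isAcyclic hG
  have hnontrivial : S.Nontrivial :=
    Set.not_subsingleton_iff.1 (mt isCycleConvex_of_subsingleton hS.prop)
  exact ⟨S, cIndep_of_minimal_not_isCycleConvex hS,
    Set.one_lt_ncard_iff_nontrivial_and_finite.2 ⟨hnontrivial, hfinite⟩⟩

theorem cIndep_iff_exists_eq_singleton_of_isAcyclic (hG : G.IsAcyclic) :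
    CIndep G S ↔ ∃ p, S = {p} := by
  simp only [CIndep, (isCycleConvex_of_isAcyclic hG _).cycleHull_eq]
  constructor
  · rintro ⟨p, hp, hpS⟩
    refine ⟨p, Set.eq_singleton_iff_unique_mem.2 ⟨hp, fun a ha => ?_⟩⟩
    by_contra hne
    exact hpS a ha ⟨hp, Ne.symm hne⟩
  · rintro ⟨p, rfl⟩
    exact ⟨p, by simp⟩

theorem carNumber_eq_one_of_isAcyclic [Nonempty V] (hG : G.IsAcyclic) : carNumber G = 1 := by
  have hset : {n : ℕ | ∃ S : Set V, CIndep G S ∧ S.ncard = n} = {1} := by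
    ext n
    simp [cIndep_iff_exists_eq_singleton_of_isAcyclic hG, eq_comm]
  rw [carNumber, hset, csSup_singleton]

theorem one_lt_carNumber_of_not_isAcyclic
    (hbdd : BddAbove {n : ℕ | ∃ S : Set V, CIndep G S ∧ S.ncard = n}) (hG : ¬ G.IsAcyclic) :
    1 < carNumber G := by
  obtain ⟨S, hS, hcard⟩ := exists_cIndep_one_lt_ncard_of_not_isAcyclic hG
  exact hcard.trans_le (le_csSup hbdd ⟨S, hS, rfl⟩)

theorem bddAbove_ncard_cIndep [Finite V] (G : SimpleGraph V) :
    BddAbove {n : ℕ | ∃ S : Set V, CIndep G S ∧ S.ncard = n} := by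
  refine ⟨Nat.card V, ?_⟩
  rintro _ ⟨S, -, rfl⟩
  exact Set.ncard_le_card S

end CycleConvexity

theorem stmt_6_general {V : Type*} [Nonempty V] (G : SimpleGraph V)
    (hbdd : BddAbove {n : ℕ | ∃ S : Set V, CIndep G S ∧ S.ncard = n}) :
    carNumber G = 1 ↔ G.IsAcyclic := by
  refine ⟨fun h => ?_, carNumber_eq_one_of_isAcyclic⟩
  by_contra hG
  exact (one_lt_carNumber_of_not_isAcyclic hbdd hG).ne' h

/-- Proposition 2(a): a finite connected graph has Caratheodory number 1 iff it
contains no cycle. -/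
theorem stmt_6 {V : Type*} [Fintype V] [Nonempty V] (G : SimpleGraph V)
    (hG : G.Connected) :
    carNumber G = 1 ↔ G.IsAcyclic :=
  stmt_6_general G (bddAbove_ncard_cIndep G)
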